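/- arXiv:2504.02266 — 2 statements merged into one kernel-verified Lean document; each statement's English description precedes it below -/
import Mathlib

section
/- (Theorem 5.1) Let f : U_n → E be a differentiable function such that M_{a,a}(f(z)) = (1 − t/2)·f(z) for all z ∈ U_n and all 1 ≤ a ≤ n. Then f satisfies the orthogonal Knizhnik–Zamolodchikov system ∂f/∂z_a = ℏ·Σ_{b ≠ a} (z_a − z_b)^{−1}·Ω_{a,b}(f) for all a, if and only if the function g(z) := (Π_{1 ≤ a < b ≤ n} (z_a − z_b)^{ℏ(1−t)/2})·f(z) satisfies the dual system ∂g/∂z_a = −ℏ·Σ_{b ≠ a} (z_a − z_b)^{−1}·K_{a,b}(g) for all a. -/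
/-!
Write `N_a = ∑ k, x_{k,a} ∂_{k,a}` for the number operator of column `a`. Normal ordering with the
anticommutation relations gives, for `a ≠ b`, the identity of operators
`2 (Ω_{a,b} + K_{a,b}) = t - N_a`: the quartic terms of `Ω_{a,b}` and `K_{a,b}` cancel in pairs
(`quartic_sum_off_diag`, `quartic_sum_diag`), and only the contractions survive
(`casimir_add_dual`). The weight condition `M_{a,a} f = (1 - t/2) f` says exactly `N_a f = f`, so
`Ω_{a,b} f = -K_{a,b} f - (1 - t)/2 • f` on the values of `f`.

On the other hand the scalar `P = ∏_{a<b} (z_a - z_b)^c` is `exp` of `c ∑_{a<b} log (z_a - z_b)`,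
so `∂P/∂z_a = P ∑_{b≠a} c / (z_a - z_b)` (`hasFDerivAt_vandermonde_cpow`). With
`c = ℏ (1 - t)/2` the Leibniz rule for `g = P • f` shows that each equation of the dual system is the
corresponding equation of the first system multiplied by the nonzero scalar `P z`; the equivalence
therefore holds for each `z` and each `a` separately.
-/

/-- A sum over `k < l` of a symmetric function vanishing on the diagonal is half the sum over all
pairs. -/
lemma two_nsmul_sum_lt {t : ℕ} {R : Type*} [AddCommGroup R] (F : Fin t → Fin t → R)
    (hs : ∀ k l, F k l = F l k) (h0 : ∀ k, F k k = 0) :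
    (2 : ℕ) • ∑ k, ∑ l ∈ Finset.univ.filter (fun l => k < l), F k l = ∑ k, ∑ l, F k l := by
  have h1 : ∑ k, ∑ l ∈ Finset.univ.filter (fun l => k < l), F k l
      = ∑ k, ∑ l, if k < l then F k l else 0 := by
    simp only [Finset.sum_filter]
  have h2 : ∑ k, ∑ l, (if k < l then F k l else 0) = ∑ k, ∑ l, if l < k then F k l else 0 := by
    rw [Finset.sum_comm]
    simp only [hs]
  rw [two_nsmul, h1]
  nth_rewrite 2 [h2]
  simp only [← Finset.sum_add_distrib]
  refine Finset.sum_congr rfl fun k _ => Finset.sum_congr rfl fun l _ => ?_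
  rcases lt_trichotomy k l with h | h | h
  · simp [h, h.not_gt]
  · subst h; simp [h0]
  · simp [h, h.not_gt]

/-- Normal ordering for two distinct rows `k ≠ l`: with `x = x_{k,a}`, `y = x_{k,b}`,
`x' = x_{l,a}`, `y' = x_{l,b}` and the corresponding contractions `d, e, d', e'`, the contributions
of `Ω_{a,b}` and `K_{a,b}` cancel. -/
lemma quartic_sum_off_diag {R : Type*} [Ring R] (x y x' y' d e d' e' : R)
    (h1 : d * x' = -(x' * d)) (h2 : d' * x = -(x * d')) (h3 : e * y' = -(y' * e))
    (h4 : e' * y = -(y * e')) (h5 : d * y = -(y * d)) (h6 : d * y' = -(y' * d))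
    (h7 : d' * y = -(y * d')) (h8 : d' * y' = -(y' * d')) (h10 : e * x' = -(x' * e))
    (h11 : e' * x = -(x * e'))
    (h13 : y * x = -(x * y)) (h14 : y' * x = -(x * y')) (h15 : y * x' = -(x' * y))
    (h16 : y' * x' = -(x' * y')) :
    (x * d' - x' * d) * (y' * e - y * e') + (y * d * (x' * e') + y' * d' * (x * e))
      + (d * e * (y' * x') + d' * e' * (y * x)) = 0 := by
  have l : ∀ {p q r s : R}, p * q = -(r * s) → ∀ w, p * (q * w) = -(r * (s * w)) := by
    intro p q r s h w
    rw [← mul_assoc, h, neg_mul, mul_assoc]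
  simp only [mul_sub, sub_mul, mul_assoc, h3, h4, h13, h16, l h1, l h2, l h5, l h6, l h7, l h8,
    l h10, l h11, l h14, l h15, mul_neg, neg_neg]
  abel

/-- Normal ordering within a single row. -/
lemma quartic_sum_diag {R : Type*} [Ring R] (x y d e : R)
    (h1 : d * x = 1 - x * d) (h2 : e * y = 1 - y * e)
    (h5 : d * y = -(y * d)) (h9 : e * x = -(x * e)) :
    y * d * (x * e) + d * e * (y * x) = 1 - x * d := by
  have e1 : y * d * (x * e) = y * e - y * x * d * e := by
    rw [mul_assoc, ← mul_assoc d, h1]; noncomm_ring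
  have e2 : d * e * (y * x) = d * x - y * d * (x * e) := by
    calc d * e * (y * x) = d * (e * y) * x := by noncomm_ring
      _ = d * x - (d * y) * (e * x) := by rw [h2]; noncomm_ring
      _ = d * x - y * d * (x * e) := by rw [h5, h9]; noncomm_ring
  rw [e2, h1]
  abel

/-- The operator identity `2 (Ω_{a,b} + K_{a,b}) = t - N_a` for `a ≠ b`, multiplied by `2`;
the letters `x, y` (resp. `d, e`) are the creation (resp. annihilation) operators of the columns
`a, b`. -/
lemma casimir_add_dual {t : ℕ} {R : Type*} [Ring R] (x y d e : Fin t → R)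
    (hdx : ∀ k l, d k * x l = (if k = l then 1 else 0) - x l * d k)
    (hey : ∀ k l, e k * y l = (if k = l then 1 else 0) - y l * e k)
    (hdy : ∀ k l, d k * y l = -(y l * d k)) (hex : ∀ k l, e k * x l = -(x l * e k))
    (hyx : ∀ k l, y k * x l = -(x l * y k)) :
    (2 : ℕ) • (∑ k, ∑ l ∈ Finset.univ.filter (fun l => k < l),
        (x k * d l - x l * d k) * (y l * e k - y k * e l))
      + (2 : ℕ) • ((∑ k, y k * d k) * (∑ k, x k * e k) + (∑ k, d k * e k) * (∑ k, y k * x k))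
      = (2 : ℕ) • ((t : R) - ∑ k, x k * d k) := by
  rw [two_nsmul_sum_lt (fun k l => (x k * d l - x l * d k) * (y l * e k - y k * e l))
    (fun k l => by noncomm_ring) (fun k => by simp)]
  have hP : ∀ p q : Fin t → R, (2 : ℕ) • ((∑ k, p k) * ∑ k, q k)
      = ∑ k, ∑ l, (p k * q l + p l * q k) := by
    intro p q
    simp only [Finset.sum_add_distrib]
    rw [Finset.sum_comm (f := fun k l => p l * q k), Finset.sum_mul_sum, two_nsmul]
  rw [smul_add, hP, hP]
  simp only [← Finset.sum_add_distrib, ← add_assoc]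
  have key : ∀ k l, (x k * d l - x l * d k) * (y l * e k - y k * e l)
      + y k * d k * (x l * e l) + y l * d l * (x k * e k)
      + d k * e k * (y l * x l) + d l * e l * (y k * x k)
      = if k = l then (2 : ℕ) • (1 - x k * d k) else 0 := by
    intro k l
    split_ifs with h
    · subst h
      have := quartic_sum_diag (x k) (y k) (d k) (e k) (by simpa using hdx k k)
        (by simpa using hey k k) (hdy k k) (hex k k)
      rw [← this]
      noncomm_ring
    · have h' : ¬ l = k := fun h' => h h'.symm
      have := quartic_sum_off_diag (x k) (y k) (x l) (y l) (d k) (e k) (d l) (e l)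
        (by simpa [h] using hdx k l) (by simpa [h'] using hdx l k)
        (by simpa [h] using hey k l) (by simpa [h'] using hey l k)
        (hdy _ _) (hdy _ _) (hdy _ _) (hdy _ _) (hex _ _) (hex _ _)
        (hyx _ _) (hyx _ _) (hyx _ _) (hyx _ _)
      rw [← this]
      abel
  simp only [key, Finset.sum_ite_eq, Finset.mem_univ, if_true]
  rw [← Finset.smul_sum, Finset.sum_sub_distrib]
  simp

/-- Logarithmic derivative of `∏_{i<j} (z_i - z_j)^c` on the open chamber. -/
lemma hasFDerivAt_vandermonde_cpow {n : ℕ} (c : ℂ) (z : Fin n → ℝ)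
    (hz : ∀ a b : Fin n, a < b → z b < z a) :
    ∃ P' : (Fin n → ℝ) →L[ℝ] ℂ,
      HasFDerivAt (fun z : Fin n → ℝ => ∏ a : Fin n, ∏ b ∈ Finset.univ.filter (fun b => a < b),
        ((z a - z b : ℝ) : ℂ) ^ c) P' z ∧
      ∀ a, P' (Pi.single a 1) = (∏ a : Fin n, ∏ b ∈ Finset.univ.filter (fun b => a < b),
        ((z a - z b : ℝ) : ℂ) ^ c) * ∑ b ∈ Finset.univ.erase a, ((z a - z b : ℝ) : ℂ)⁻¹ * c := by
  let L : (Fin n → ℝ) → ℂ := fun z => ∑ i : Fin n, ∑ j ∈ Finset.univ.filter (fun j => i < j),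
    ((Real.log (z i - z j) * 1 : ℝ) : ℂ) * c
  have hPL : ∀ w : Fin n → ℝ, (∀ a b : Fin n, a < b → w b < w a) →
      (∏ a : Fin n, ∏ b ∈ Finset.univ.filter (fun b => a < b), ((w a - w b : ℝ) : ℂ) ^ c)
        = Complex.exp (L w) := by
    intro w hw
    simp only [L, Complex.exp_sum]
    refine Finset.prod_congr rfl fun i _ => Finset.prod_congr rfl fun j hj => ?_
    have hpos : 0 < w i - w j := sub_pos.2 (hw i j (Finset.mem_filter.1 hj).2)
    rw [Complex.cpow_def_of_ne_zero (by exact_mod_cast hpos.ne'), mul_one,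
      Complex.ofReal_log hpos.le]
  have hopen : ∀ᶠ w in nhds z, ∀ a b : Fin n, a < b → w b < w a := by
    simp only [Filter.eventually_all]
    intro a b hab
    exact (isOpen_lt (continuous_apply b) (continuous_apply a)).mem_nhds (hz a b hab)
  let D : Fin n → Fin n → (Fin n → ℝ) →L[ℝ] ℂ := fun i j =>
    c • (Complex.ofRealCLM.comp ((z i - z j)⁻¹ •
      (ContinuousLinearMap.proj (R := ℝ) (φ := fun _ : Fin n => ℝ) i
        - ContinuousLinearMap.proj (R := ℝ) (φ := fun _ : Fin n => ℝ) j)))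
  have hL : HasFDerivAt L (∑ i : Fin n, ∑ j ∈ Finset.univ.filter (fun j => i < j), D i j) z := by
    refine HasFDerivAt.fun_sum fun i _ => HasFDerivAt.fun_sum fun j hj => ?_
    have hne : z i - z j ≠ 0 := (sub_pos.2 (hz i j (Finset.mem_filter.1 hj).2)).ne'
    have h1 : HasFDerivAt (fun w : Fin n → ℝ => w i - w j)
        (ContinuousLinearMap.proj (R := ℝ) (φ := fun _ : Fin n => ℝ) i
          - ContinuousLinearMap.proj (R := ℝ) (φ := fun _ : Fin n => ℝ) j) z :=
      (hasFDerivAt_apply i z).sub (hasFDerivAt_apply j z)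
    have h2 := Complex.ofRealCLM.hasFDerivAt.comp z (h1.log hne)
    simpa only [mul_one] using! h2.mul_const c
  refine ⟨_, (hL.cexp).congr_of_eventuallyEq (hopen.mono fun w hw => hPL w hw), fun a => ?_⟩
  rw [hPL z hz, smul_apply, smul_eq_mul]
  congr 1
  simp only [_root_.sum_apply, D]
  -- Split the pairs `i < j` according to `i = a` or `j = a`.
  have hterm : ∀ i j : Fin n, (if i < j then (c • (Complex.ofRealCLM.comp ((z i - z j)⁻¹ •
      (ContinuousLinearMap.proj (R := ℝ) (φ := fun _ : Fin n => ℝ) i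
        - ContinuousLinearMap.proj (R := ℝ) (φ := fun _ : Fin n => ℝ) j))) :
          (Fin n → ℝ) →L[ℝ] ℂ) (Pi.single a 1) else 0)
      = (if i = a then (if a < j then ((z a - z j : ℝ) : ℂ)⁻¹ * c else 0) else 0)
        + (if j = a then (if i < a then ((z a - z i : ℝ) : ℂ)⁻¹ * c else 0) else 0) := by
    intro i j
    by_cases hia : i = a
    · subst hia
      by_cases hij : i < j
      · have : j ≠ i := hij.ne'
        simp [hij, this, mul_comm]
      · simp [hij]
    · by_cases hja : j = a
      · subst hja
        by_cases hij : i < j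
        · have : z j - z i = -(z i - z j) := by ring
          rw [this]
          simp [hij, hia, -neg_sub, mul_comm]
        · simp [hij, hia]
      · simp [hia, hja]
  simp only [Finset.sum_filter, hterm, Finset.sum_add_distrib]
  rw [Finset.sum_comm (f := fun i j => if i = a then
    (if a < j then ((z a - z j : ℝ) : ℂ)⁻¹ * c else 0) else 0)]
  simp only [Finset.sum_ite_eq', Finset.mem_univ, if_true]
  rw [← Finset.sum_add_distrib, ← Finset.sum_erase (a := a) _ (by simp)]
  refine Finset.sum_congr rfl fun b hb => ?_
  rcases lt_or_gt_of_ne (Finset.ne_of_mem_erase hb) with h | h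
  · simp [h, h.not_gt]
  · simp [h, h.not_gt]


/-- **Theorem 5.1.**  Under the orthogonal CAR setup, a differentiable function
`f : U_n → E` with `M_{a,a} f = (1 - t/2) f` satisfies the orthogonal KZ system
`∂f/∂z_a = ℏ Σ_{b≠a} (z_a - z_b)⁻¹ Ω_{a,b} f` iff
`g(z) = (Π_{a<b} (z_a - z_b)^{ℏ(1-t)/2}) f(z)` satisfies the dual system
`∂g/∂z_a = -ℏ Σ_{b≠a} (z_a - z_b)⁻¹ K_{a,b} g`,
where `K_{a,b} = (1/2)(M_{b,a} M_{a,b} + M_{-a,b} M_{b,-a})`. -/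
theorem theorem5_1 (t n : ℕ) (ht : 0 < t) (hn : 0 < n)
    (E : Type*) [NormedAddCommGroup E] [NormedSpace ℂ E]
    (x d : Fin t → Fin n → Module.End ℂ E)
    (hxx : ∀ k a l b, x k a * x l b + x l b * x k a = 0)
    (hdd : ∀ k a l b, d k a * d l b + d l b * d k a = 0)
    (hxd : ∀ k a l b, x k a * d l b + d l b * x k a =
      if k = l ∧ a = b then 1 else 0)
    (MP : Fin n → Fin n → Module.End ℂ E)
    (hMP : ∀ a b, MP a b = ∑ k : Fin t, ((2 : ℂ)⁻¹) • (x k a * d k b - d k b * x k a))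
    (MN : Fin n → Fin n → Module.End ℂ E)
    (hMN : ∀ a b, MN a b = ∑ k : Fin t, ((2 : ℂ)⁻¹) • (d k a * d k b - d k b * d k a))
    (MB : Fin n → Fin n → Module.End ℂ E)
    (hMB : ∀ b a, MB b a = ∑ k : Fin t, ((2 : ℂ)⁻¹) • (x k b * x k a - x k a * x k b))
    (Ω : Fin n → Fin n → Module.End ℂ E)
    (hΩ : ∀ a b, Ω a b = ((2 : ℂ)⁻¹) •
      ∑ k : Fin t, ∑ l ∈ Finset.univ.filter (fun l => k < l),
        (x k a * d l a - x l a * d k a) * (x l b * d k b - x k b * d l b))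
    (K : Fin n → Fin n → Module.End ℂ E)
    (hK : ∀ a b, K a b = ((2 : ℂ)⁻¹) • (MP b a * MP a b + MN a b * MB b a))
    (ℏ : ℂ)
    (U : Set (Fin n → ℝ)) (hU : U = {z | ∀ a b : Fin n, a < b → z b < z a})
    (f : (Fin n → ℝ) → E)
    (hfdiff : ∀ z ∈ U, DifferentiableAt ℝ f z)
    (hfwt : ∀ z ∈ U, ∀ a, MP a a (f z) = (1 - (t : ℂ) / 2) • f z)
    (g : (Fin n → ℝ) → E)
    (hg : ∀ z, g z =
      (∏ a : Fin n, ∏ b ∈ Finset.univ.filter (fun b => a < b),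
        ((z a - z b : ℝ) : ℂ) ^ (ℏ * (1 - (t : ℂ)) / 2)) • f z) :
    (∀ z ∈ U, ∀ a : Fin n, fderiv ℝ f z (Pi.single a 1)
        = ℏ • ∑ b ∈ Finset.univ.erase a, ((z a - z b : ℝ) : ℂ)⁻¹ • Ω a b (f z))
    ↔ (∀ z ∈ U, ∀ a : Fin n, fderiv ℝ g z (Pi.single a 1)
        = (-ℏ) • ∑ b ∈ Finset.univ.erase a,
            ((z a - z b : ℝ) : ℂ)⁻¹ • K a b (g z)) := by
  set c : ℂ := ℏ * (1 - (t : ℂ)) / 2 with hc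
  have hdx : ∀ k a l b, d k a * x l b = (if k = l ∧ a = b then 1 else 0) - x l b * d k a := by
    intro k a l b
    rw [eq_sub_iff_add_eq, add_comm, hxd l b k a]
    simp only [eq_comm]
  have hdx0 : ∀ a b, a ≠ b → ∀ k l, d k a * x l b = -(x l b * d k a) := by
    intro a b hab k l
    rw [hdx]; simp [hab]
  have hMP' : ∀ a b, a ≠ b → MP a b = ∑ k, x k a * d k b := by
    intro a b hab
    rw [hMP]
    refine Finset.sum_congr rfl fun k _ => ?_
    rw [hdx0 b a hab.symm, sub_neg_eq_add, ← two_smul ℂ (x k a * d k b), smul_smul]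
    norm_num
  have hMN' : ∀ a b, MN a b = ∑ k, d k a * d k b := by
    intro a b
    rw [hMN]
    refine Finset.sum_congr rfl fun k _ => ?_
    rw [eq_neg_of_add_eq_zero_left (hdd k b k a), sub_neg_eq_add,
      ← two_smul ℂ (d k a * d k b), smul_smul]
    norm_num
  have hMB' : ∀ b a, MB b a = ∑ k, x k b * x k a := by
    intro b a
    rw [hMB]
    refine Finset.sum_congr rfl fun k _ => ?_
    rw [eq_neg_of_add_eq_zero_left (hxx k a k b), sub_neg_eq_add,
      ← two_smul ℂ (x k b * x k a), smul_smul]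
    norm_num
  -- The weight condition says that each column has particle number one.
  have hN : ∀ z ∈ U, ∀ a, (∑ k, x k a * d k a) (f z) = f z := by
    intro z hz a
    have h := hfwt z hz a
    have h1 : MP a a = (∑ k, x k a * d k a) - ((t : ℂ) / 2) • (1 : Module.End ℂ E) := by
      have : ∀ k, ((2 : ℂ)⁻¹) • (x k a * d k a - d k a * x k a)
          = x k a * d k a - ((2 : ℂ)⁻¹) • (1 : Module.End ℂ E) := by
        intro k
        rw [hdx]
        simp only [and_self, if_true]
        module
      rw [hMP, Finset.sum_congr rfl fun k _ => this k, Finset.sum_sub_distrib]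
      simp only [Finset.sum_const, Finset.card_univ, Fintype.card_fin]
      module
    rw [h1, LinearMap.sub_apply, LinearMap.smul_apply, Module.End.one_apply, sub_eq_iff_eq_add] at h
    rw [h]
    module
  have hΩK : ∀ z ∈ U, ∀ a b, b ≠ a → Ω a b (f z) = -K a b (f z) - ((1 - (t : ℂ)) / 2) • f z := by
    intro z hz a b hba
    have h := casimir_add_dual (fun k => x k a) (fun k => x k b) (fun k => d k a) (fun k => d k b)
      (fun k l => by simpa using hdx k a l a) (fun k l => by simpa using hdx k b l b)
      (fun k l => hdx0 a b hba.symm k l) (fun k l => hdx0 b a hba k l)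
      (fun k l => eq_neg_of_add_eq_zero_left (hxx k b l a))
    have h2 : (4 : ℂ) • (Ω a b + K a b)
        = (2 : ℂ) • ((t : ℂ) • (1 : Module.End ℂ E) - ∑ k, x k a * d k a) := by
      have ht1 : (t : ℂ) • (1 : Module.End ℂ E) = (t : Module.End ℂ E) := by
        rw [Nat.cast_smul_eq_nsmul, nsmul_one]
      rw [ht1, hΩ, hK, hMP' b a hba, hMP' a b hba.symm, hMN', hMB']
      rw [← Nat.cast_smul_eq_nsmul ℂ, ← Nat.cast_smul_eq_nsmul ℂ, ← Nat.cast_smul_eq_nsmul ℂ] at h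
      push_cast at h
      rw [← h]
      module
    have h3 := congrArg (fun T : Module.End ℂ E => T (f z)) h2
    simp only [LinearMap.smul_apply, LinearMap.add_apply, LinearMap.sub_apply,
      Module.End.one_apply, hN z hz a] at h3
    have h4 : Ω a b (f z) + K a b (f z) = (4 : ℂ)⁻¹ • (2 : ℂ) • ((t : ℂ) • f z - f z) := by
      rw [← h3, smul_smul]; norm_num
    rw [eq_sub_of_add_eq h4]
    module
  refine forall_congr' fun z => forall_congr' fun hz => forall_congr' fun a => ?_
  have hz' : ∀ a b : Fin n, a < b → z b < z a := by rw [hU] at hz; exact hz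
  obtain ⟨P', hP', hP'a⟩ := hasFDerivAt_vandermonde_cpow c z hz'
  have hgfun : g = fun z => (∏ a : Fin n, ∏ b ∈ Finset.univ.filter (fun b => a < b),
      ((z a - z b : ℝ) : ℂ) ^ c) • f z := funext hg
  have hfd : fderiv ℝ g z (Pi.single a 1)
      = (∏ a : Fin n, ∏ b ∈ Finset.univ.filter (fun b => a < b), ((z a - z b : ℝ) : ℂ) ^ c) •
        (fderiv ℝ f z (Pi.single a 1)
          + (∑ b ∈ Finset.univ.erase a, ((z a - z b : ℝ) : ℂ)⁻¹ * c) • f z) := by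
    rw [hgfun, (hP'.fun_smul (hfdiff z hz).hasFDerivAt).fderiv]
    simp only [_root_.add_apply, _root_.smul_apply,
      ContinuousLinearMap.smulRight_apply, hP'a]
    rw [smul_add, smul_smul]
  have hP0 : (∏ a : Fin n, ∏ b ∈ Finset.univ.filter (fun b => a < b),
      ((z a - z b : ℝ) : ℂ) ^ c) ≠ 0 := by
    refine Finset.prod_ne_zero_iff.2 fun i _ => Finset.prod_ne_zero_iff.2 fun j hj => ?_
    have hne : z i - z j ≠ 0 := (sub_pos.2 (hz' i j (Finset.mem_filter.1 hj).2)).ne'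
    exact fun h => hne (by exact_mod_cast ((Complex.cpow_eq_zero_iff _ _).1 h).1)
  rw [hfd, hg z]
  generalize (∏ a : Fin n, ∏ b ∈ Finset.univ.filter (fun b => a < b),
    ((z a - z b : ℝ) : ℂ) ^ c) = P at hP0 ⊢
  have hR : (-ℏ) • ∑ b ∈ Finset.univ.erase a, ((z a - z b : ℝ) : ℂ)⁻¹ • K a b (P • f z)
      = P • (ℏ • (∑ b ∈ Finset.univ.erase a, ((z a - z b : ℝ) : ℂ)⁻¹ • Ω a b (f z))
          + (∑ b ∈ Finset.univ.erase a, ((z a - z b : ℝ) : ℂ)⁻¹ * c) • f z) := by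
    rw [Finset.smul_sum, Finset.smul_sum, Finset.sum_smul, ← Finset.sum_add_distrib,
      Finset.smul_sum]
    refine Finset.sum_congr rfl fun b hb => ?_
    rw [hΩK z hz a b (Finset.ne_of_mem_erase hb), map_smul, hc]
    module
  rw [hR, smul_right_inj hP0, add_left_inj]
end

section
/- (Appendix A: hypergeometric solutions of the KZ equations for Hom(1, V*⊗V*⊗V⊗V)) On the domain D, the functions f and g satisfy the Knizhnik–Zamolodchikov equations ℏ^{−1}·∂f/∂z₁ = g/z₁₂ − (t·f + g)/z₁₃ and ℏ^{−1}·∂g/∂z₁ = f/z₁₂ − (f + t·g)/z₁₄. -/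
/-!
On `D` the cross-ratio `u` lies in `(-1, 0)`, and `A = φ ∘ u` with
`φ(x) = c₁ x^{1-Δ} ₂F₁(1-ℏ-Δ, 1+ℏ-Δ; 2-Δ; x) + c₂ ₂F₁(-ℏ, ℏ; Δ; x)`.  The theorem comes down to
the hypergeometric equation with parameters `(-ℏ, ℏ; Δ)`,
`x (1 - x) φ'' + (Δ - x) φ' + ℏ² φ = 0`.

* `hyp_ode`: a power series whose coefficients satisfy
  `(k+1)(k+c) p_{k+1} = (k+a)(k+b) p_k` converges on the unit disc, may be differentiated
  termwise, and solves the equation with parameters `(a, b; c)`; `F2_ode` applies this to `₂F₁`.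
* `solution_ode`: multiplying by `x^{1-Δ}` turns solutions with parameters
  `(1-ℏ-Δ, 1+ℏ-Δ; 2-Δ)` into solutions with parameters `(-ℏ, ℏ; Δ)`, so `φ` solves the equation
  on `(-1, 0)`.
* Since `∂₁u = z₂₃ z₂₄ / (z₃₄ z₁₂²)` and, by the Plücker relation, `1 - u = z₁₃ z₂₄ / (z₁₂ z₃₄)`,
  the function `g` simplifies on `D` to `ℏ⁻¹ (1 - u) φ'(u) z₁₃^{-Δ} z₂₄^{-Δ}`. The first KZ equation
  is then the product rule, and the second is `ℏ⁻² z₁₃^{-Δ} z₂₄^{-Δ} ∂₁u / u` times the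
  hypergeometric equation at `u`.

In the code the point `z = (z₁, z₂, z₃, z₄)` is indexed by `Fin 4`, so `z₁` is `z 0`. The partial
derivatives are computed along `s ↦ Function.update z 0 s`.
-/

open Filter Topology

/-- The ratio test. The recurrence gives the ratio of consecutive terms without dividing by `p k`,
so the case where the series terminates needs no separate treatment. -/
lemma hyp_summable (p : ℕ → ℂ) (a b c : ℂ) (hc : ∀ k : ℕ, (k : ℂ) + c ≠ 0)
    (hp : ∀ k : ℕ, ((k : ℂ) + 1) * (k + c) * p (k + 1) = (k + a) * (k + b) * p k)
    (x : ℂ) (hx : ‖x‖ < 1) : Summable fun k => ‖p k * x ^ k‖ := by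
  obtain ⟨r, hr1, hr2⟩ := exists_between hx
  refine summable_of_ratio_norm_eventually_le hr2 ?_
  have hk1 : ∀ k : ℕ, (k : ℂ) + 1 ≠ 0 := fun k => by exact_mod_cast Nat.succ_ne_zero k
  have hlim : Tendsto (fun k : ℕ => ‖((a + 1 * (k : ℂ)) / (1 + 1 * (k : ℂ))) *
      ((b + 1 * (k : ℂ)) / (c + 1 * (k : ℂ))) * x‖) atTop (𝓝 ‖x‖) := by
    have h1 := tendsto_add_mul_div_add_mul_atTop_nhds a 1 (1 : ℂ) (d := 1) one_ne_zero
    have h2 := tendsto_add_mul_div_add_mul_atTop_nhds b c (1 : ℂ) (d := 1) one_ne_zero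
    simpa using ((h1.mul h2).mul_const x).norm
  filter_upwards [hlim.eventually_le_const hr1] with k hk
  have e : p (k + 1) * x ^ (k + 1) = ((a + 1 * (k : ℂ)) / (1 + 1 * (k : ℂ)) *
      ((b + 1 * (k : ℂ)) / (c + 1 * (k : ℂ))) * x) * (p k * x ^ k) := by
    have h1 := hk1 k
    have h2 := hc k
    have : p (k + 1) = (k + a) * (k + b) * p k / (((k : ℂ) + 1) * (k + c)) := by
      rw [eq_div_iff (mul_ne_zero h1 h2), ← hp]; ring
    rw [this, one_mul, add_comm a, add_comm b, add_comm c, add_comm 1 (k : ℂ)]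
    field_simp
    ring
  rw [norm_norm, norm_norm, e, norm_mul]
  gcongr

/-- Convergence on the open unit disc passes to the termwise derivative: compare with
`∑ (k + 1) (‖x‖ / r) ^ k` for some `‖x‖ < r < 1`. -/
lemma summable_derivCoeff (p : ℕ → ℂ)
    (hp : ∀ x : ℂ, ‖x‖ < 1 → Summable fun k => ‖p k * x ^ k‖) (x : ℂ) (hx : ‖x‖ < 1) :
    Summable fun k : ℕ => ‖((k : ℂ) + 1) * p (k + 1) * x ^ k‖ := by
  obtain ⟨r, hr1, hr2⟩ := exists_between hx
  have hr0 : 0 < r := (norm_nonneg x).trans_lt hr1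
  have hs := hp r (by simpa [abs_of_pos hr0] using hr2)
  have hq : ‖x‖ / r < 1 := by rwa [div_lt_one hr0]
  have hg : Summable fun k : ℕ => ((k : ℝ) + 1) * (‖x‖ / r) ^ k := by
    have h1 := summable_pow_mul_geometric_of_norm_lt_one 1 (r := ‖x‖ / r)
      (by rwa [Real.norm_of_nonneg (by positivity)])
    have h2 := summable_geometric_of_lt_one (by positivity) hq
    simpa [add_mul] using h1.add h2
  refine Summable.of_nonneg_of_le (fun _ => norm_nonneg _) (fun k => ?_)
    (hg.mul_left ((∑' k, ‖p k * (r : ℂ) ^ k‖) / r))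
  have hb : ‖p (k + 1) * (r : ℂ) ^ (k + 1)‖ ≤ ∑' k, ‖p k * (r : ℂ) ^ k‖ :=
    hs.le_tsum (k + 1) (fun _ _ => norm_nonneg _)
  have hk : ‖(k : ℂ) + 1‖ = (k : ℝ) + 1 := by exact_mod_cast Complex.norm_natCast (k + 1)
  rw [norm_mul, norm_pow, Complex.norm_real, Real.norm_of_nonneg hr0.le] at hb
  rw [norm_mul, norm_mul, hk, norm_pow]
  calc ((k : ℝ) + 1) * ‖p (k + 1)‖ * ‖x‖ ^ k
      = (‖p (k + 1)‖ * r ^ (k + 1)) / r * (((k : ℝ) + 1) * (‖x‖ / r) ^ k) := by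
        rw [div_pow]; field_simp; ring
    _ ≤ _ := by gcongr

lemma hasDerivAt_powerSeries (p : ℕ → ℂ)
    (hp : ∀ x : ℂ, ‖x‖ < 1 → Summable fun k => ‖p k * x ^ k‖) (x : ℂ) (hx : ‖x‖ < 1) :
    HasDerivAt (fun y => ∑' k : ℕ, p k * y ^ k)
      (∑' k : ℕ, ((k : ℂ) + 1) * p (k + 1) * x ^ k) x := by
  obtain ⟨r, hr1, hr2⟩ := exists_between hx
  have hr0 : 0 < r := (norm_nonneg x).trans_lt hr1
  have hs := summable_derivCoeff p hp r (by simpa [abs_of_pos hr0] using hr2)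
  have hu : Summable fun k : ℕ => ‖p k * ((k : ℂ) * (r : ℂ) ^ (k - 1))‖ := by
    rw [← summable_nat_add_iff 1]
    refine hs.congr fun k => ?_
    simp only [Nat.add_sub_cancel, Nat.cast_add, Nat.cast_one]
    congr 1; ring
  have hbd : ∀ (k : ℕ) (y : ℂ), y ∈ Metric.ball (0 : ℂ) r →
      ‖p k * ((k : ℂ) * y ^ (k - 1))‖ ≤ ‖p k * ((k : ℂ) * (r : ℂ) ^ (k - 1))‖ := by
    intro k y hy
    rw [mem_ball_zero_iff] at hy
    simp only [norm_mul, norm_pow, Complex.norm_real, Real.norm_of_nonneg hr0.le]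
    gcongr
  have hxb : x ∈ Metric.ball (0 : ℂ) r := by simpa using hr1
  have key := hasDerivAt_tsum_of_isPreconnected (g := fun k y => p k * y ^ k)
    (g' := fun k y => p k * ((k : ℂ) * y ^ (k - 1))) hu Metric.isOpen_ball
    (convex_ball (0 : ℂ) r).isPreconnected
    (fun k y _ => (hasDerivAt_pow k y).const_mul (p k)) hbd hxb (hp x hx).of_norm hxb
  have e : ∑' k : ℕ, p k * ((k : ℂ) * x ^ (k - 1)) =
      ∑' k : ℕ, ((k : ℂ) + 1) * p (k + 1) * x ^ k := by
    rw [((hu.of_nonneg_of_le (fun _ => norm_nonneg _) fun k => hbd k x hxb).of_norm).tsum_eq_zero_add]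
    simp only [Nat.cast_zero, zero_mul, mul_zero, zero_add, Nat.cast_add, Nat.cast_one,
      Nat.add_sub_cancel]
    exact tsum_congr fun k => by ring
  rwa [e] at key

lemma hasSum_shift {f g : ℕ → ℂ} {s : ℂ} (hg : HasSum g s) (h0 : f 0 = 0)
    (h : ∀ k, f (k + 1) = g k) : HasSum f s := by
  rw [← hasSum_nat_add_iff' 1]
  simpa [h0, h] using hg

/-- The hypergeometric differential equation: the coefficient of `x ^ k` on its left-hand side is
`(k + 1) (k + c) p (k + 1) - (k + a) (k + b) p k`. -/
lemma hyp_ode (p : ℕ → ℂ) (a b c : ℂ) (hc : ∀ k : ℕ, (k : ℂ) + c ≠ 0)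
    (hp : ∀ k : ℕ, ((k : ℂ) + 1) * (k + c) * p (k + 1) = (k + a) * (k + b) * p k) :
    ∃ F' F'' : ℂ → ℂ, ∀ x : ℂ, ‖x‖ < 1 →
      HasDerivAt (fun y => ∑' k : ℕ, p k * y ^ k) (F' x) x ∧ HasDerivAt F' (F'' x) x ∧
      x * (1 - x) * F'' x + (c - (a + b + 1) * x) * F' x - a * b * ∑' k : ℕ, p k * x ^ k = 0 := by
  have S0 := hyp_summable p a b c hc hp
  have S1 := summable_derivCoeff p S0
  have S2 := summable_derivCoeff _ S1
  refine ⟨_, _, fun x hx => ⟨hasDerivAt_powerSeries p S0 x hx, hasDerivAt_powerSeries _ S1 x hx, ?_⟩⟩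
  have H0 := (S0 x hx).of_norm.hasSum
  have H1 := (S1 x hx).of_norm.hasSum
  have H2 := (S2 x hx).of_norm.hasSum
  -- `K1`, `K2'`, `K3'` are the series of `x F'`, `x F''`, `x² F''`, reindexed so that the `k`-th term
  -- carries `x ^ k`
  have K1 : HasSum (fun k : ℕ => (k : ℂ) * p k * x ^ k)
      (x * ∑' k : ℕ, ((k : ℂ) + 1) * p (k + 1) * x ^ k) := by
    refine hasSum_shift (H1.mul_left x) (by simp) fun k => ?_
    push_cast; ring
  have K2 := H2.mul_left x
  have K2' := hasSum_shift (f := fun k : ℕ => (k : ℂ) * (k + 1) * p (k + 1) * x ^ k) K2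
    (by simp) fun k => by push_cast; ring
  have K3' := hasSum_shift (f := fun k : ℕ => (k : ℂ) * (k - 1) * p k * x ^ k)
    (K2'.mul_left x) (by simp) fun k => by push_cast; ring
  have T := (((K2'.sub K3').add (H1.mul_left c)).sub (K1.mul_left (a + b + 1))).sub
    (H0.mul_left (a * b))
  have T0 := T.unique ((funext fun k => by linear_combination x ^ k * hp k :
    (fun k : ℕ => (k : ℂ) * (k + 1) * p (k + 1) * x ^ k - (k : ℂ) * (k - 1) * p k * x ^ k
      + c * (((k : ℂ) + 1) * p (k + 1) * x ^ k) - (a + b + 1) * ((k : ℂ) * p k * x ^ k)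
      - a * b * (p k * x ^ k)) = fun _ => 0) ▸ hasSum_zero)
  linear_combination T0

lemma F2_ode (asc : ℂ → ℕ → ℂ)
    (hasc : ∀ a k, asc a k = ∏ i ∈ Finset.range k, (a + (i : ℂ)))
    (F2 : ℂ → ℂ → ℂ → ℂ → ℂ)
    (hF2 : ∀ a b c w, F2 a b c w =
      ∑' k : ℕ, asc a k * asc b k / (asc c k * (Nat.factorial k : ℂ)) * w ^ k)
    (a b c : ℂ) (hc : ∀ k : ℕ, (k : ℂ) + c ≠ 0) :
    ∃ F' F'' : ℂ → ℂ, ∀ x : ℂ, ‖x‖ < 1 →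
      HasDerivAt (F2 a b c) (F' x) x ∧ HasDerivAt F' (F'' x) x ∧
      x * (1 - x) * F'' x + (c - (a + b + 1) * x) * F' x - a * b * F2 a b c x = 0 := by
  have h := hyp_ode (fun k => asc a k * asc b k / (asc c k * (Nat.factorial k : ℂ))) a b c hc ?_
  · rw [show F2 a b c = _ from funext (hF2 a b c)]
    exact h
  intro k
  have hck : asc c k ≠ 0 := by
    rw [hasc, Finset.prod_ne_zero_iff]
    intro i _
    rw [add_comm]; exact hc i
  have hs : ∀ d, asc d (k + 1) = asc d k * (d + k) := fun d => by
    rw [hasc, hasc, Finset.prod_range_succ]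
  have hf : ((k.factorial : ℕ) : ℂ) ≠ 0 := by exact_mod_cast k.factorial_ne_zero
  have h1 : (k : ℂ) + 1 ≠ 0 := by exact_mod_cast k.succ_ne_zero
  have h2 := hc k
  have h2' : c + k ≠ 0 := by rwa [add_comm]
  simp only [hs, Nat.factorial_succ]
  push_cast
  field_simp
  ring

/-- The two Frobenius solutions at the origin, combined linearly on `(-1, 0)`. The first one involves
the principal power of a negative real number, which is differentiable along the real axis although
not along `ℂ`. -/
lemma solution_ode (F F' F'' G G' G'' : ℂ → ℂ) (ℏ Δ c₁ c₂ : ℂ) (h0 : Δ ≠ 0) (h1 : Δ ≠ 1)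
    (hF : ∀ x : ℂ, ‖x‖ < 1 → HasDerivAt F (F' x) x ∧ HasDerivAt F' (F'' x) x ∧
      x * (1 - x) * F'' x + ((2 - Δ) - ((1 - ℏ - Δ) + (1 + ℏ - Δ) + 1) * x) * F' x
        - (1 - ℏ - Δ) * (1 + ℏ - Δ) * F x = 0)
    (hG : ∀ x : ℂ, ‖x‖ < 1 → HasDerivAt G (G' x) x ∧ HasDerivAt G' (G'' x) x ∧
      x * (1 - x) * G'' x + (Δ - ((-ℏ) + ℏ + 1) * x) * G' x - (-ℏ) * ℏ * G x = 0) :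
    ∃ φ' φ'' : ℝ → ℂ, ∀ x : ℝ, -1 < x → x < 0 →
      HasDerivAt (fun y : ℝ => c₁ * (y : ℂ) ^ (1 - Δ) * F y + c₂ * G y) (φ' x) x ∧
      HasDerivAt φ' (φ'' x) x ∧
      x * (1 - x) * φ'' x + (Δ - x) * φ' x
        + ℏ ^ 2 * (c₁ * (x : ℂ) ^ (1 - Δ) * F x + c₂ * G x) = 0 := by
  refine ⟨fun y => c₁ * ((1 - Δ) * (y : ℂ) ^ (-Δ) * F y + (y : ℂ) ^ (1 - Δ) * F' y) + c₂ * G' y,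
    fun y => c₁ * ((1 - Δ) * (-Δ * (y : ℂ) ^ (-Δ - 1) * F y + (y : ℂ) ^ (-Δ) * F' y)
      + ((1 - Δ) * (y : ℂ) ^ (-Δ) * F' y + (y : ℂ) ^ (1 - Δ) * F'' y)) + c₂ * G'' y,
    fun x hx1 hx0 => ?_⟩
  have hx : ‖(x : ℂ)‖ < 1 := by
    rw [Complex.norm_real, Real.norm_eq_abs, abs_lt]; exact ⟨hx1, by linarith⟩
  obtain ⟨f1, f2, f3⟩ := hF x hx
  obtain ⟨g1, g2, g3⟩ := hG x hx
  have hp1 : HasDerivAt (fun y : ℝ => (y : ℂ) ^ (1 - Δ)) ((1 - Δ) * (x : ℂ) ^ (-Δ)) x := by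
    have := hasDerivAt_ofReal_cpow_const hx0.ne (r := 1 - Δ) (sub_ne_zero.mpr h1.symm)
    rwa [show (1 - Δ - 1) = -Δ by ring] at this
  have hp2 := hasDerivAt_ofReal_cpow_const hx0.ne (r := -Δ) (neg_ne_zero.mpr h0)
  refine ⟨?_, ?_, ?_⟩
  · refine (((hp1.mul f1.comp_ofReal).const_mul c₁).add (g1.comp_ofReal.const_mul c₂)).congr_of_eventuallyEq
      (Eventually.of_forall fun y => ?_)
    simp only [Pi.add_apply, Pi.mul_apply]; ring
  · refine HasDerivAt.congr_deriv (((((hp2.const_mul (1 - Δ)).mul f1.comp_ofReal).add (hp1.mul f2.comp_ofReal)).const_mul c₁).add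
      (g2.comp_ofReal.const_mul c₂)) ?_
    ring
  · have hx0' : (x : ℂ) ≠ 0 := by exact_mod_cast hx0.ne
    have e1 : (x : ℂ) ^ (1 - Δ) = x ^ 2 * (x : ℂ) ^ (-Δ - 1) := by
      rw [show 1 - Δ = (-Δ - 1) + 2 by ring, Complex.cpow_add _ _ hx0', Complex.cpow_ofNat]; ring
    have e2 : (x : ℂ) ^ (-Δ) = x * (x : ℂ) ^ (-Δ - 1) := by
      rw [show -Δ = (-Δ - 1) + 1 by ring, Complex.cpow_add _ _ hx0', Complex.cpow_one]; ring_nf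
    simp only [e1]
    rw [e2]
    linear_combination c₁ * x ^ 2 * (x : ℂ) ^ (-Δ - 1) * f3 + c₂ * g3

/-- A partial derivative as a derivative in one real variable, the other coordinates being fixed. -/
lemma fderiv_single_of_update {F : (Fin 4 → ℝ) → ℂ} {z : Fin 4 → ℝ} {d : ℂ}
    (hF : DifferentiableAt ℝ F z)
    (hd : HasDerivAt (fun s : ℝ => F (Function.update z 0 s)) d (z 0)) :
    fderiv ℝ F z (Pi.single 0 1) = d := by
  have h := hF.hasFDerivAt
  rw [← Function.update_eq_self 0 z] at h
  have := HasFDerivAt.comp_hasDerivAt (z 0) h (hasDerivAt_update z 0 (z 0))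
  rw [Function.update_eq_self] at this
  exact this.unique hd

lemma differentiableAt_sub_cpow {z : Fin 4 → ℝ} {i j : Fin 4} (h : z j < z i) (r : ℂ) :
    DifferentiableAt ℝ (fun w : Fin 4 → ℝ => ((w i - w j : ℝ) : ℂ) ^ r) z := by
  have h1 : DifferentiableAt ℝ (fun s : ℝ => (s : ℂ) ^ r) (z i - z j) := by
    by_cases hr : r = 0
    · simp [hr]
    · exact (hasDerivAt_ofReal_cpow_const (sub_pos.mpr h).ne' hr).differentiableAt
  exact h1.comp z (f := fun w : Fin 4 → ℝ => w i - w j) (by fun_prop)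

/-- The conditions defining `D` place the cross-ratio in `(-1, 0)`. -/
lemma crossRatio_mem {z : Fin 4 → ℝ}
    (hz : (z 3 < z 2 ∧ z 2 < z 1 ∧ z 1 < z 0) ∧
      (z 0 - z 3) * (z 1 - z 2) < (z 0 - z 1) * (z 2 - z 3)) :
    -1 < (z 0 - z 3) * (z 2 - z 1) / ((z 0 - z 1) * (z 2 - z 3)) ∧
    (z 0 - z 3) * (z 2 - z 1) / ((z 0 - z 1) * (z 2 - z 3)) < 0 := by
  obtain ⟨⟨h1, h2, h3⟩, h4⟩ := hz
  have hp : 0 < (z 0 - z 1) * (z 2 - z 3) := mul_pos (by linarith) (by linarith)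
  constructor
  · rw [lt_div_iff₀ hp]; linarith
  · exact div_neg_of_neg_of_pos (mul_neg_of_pos_of_neg (by linarith) (by linarith)) hp

lemma hasDerivAt_crossRatio {x p q r : ℝ} (hxp : x ≠ p) :
    HasDerivAt (fun s : ℝ => (s - r) * (q - p) / ((s - p) * (q - r)))
      ((p - q) * (p - r) / ((q - r) * (x - p) ^ 2)) x := by
  by_cases hqr : q = r
  · simpa [hqr] using hasDerivAt_const x (0 : ℝ)
  have h1 : x - p ≠ 0 := sub_ne_zero.mpr hxp
  have h2 : q - r ≠ 0 := sub_ne_zero.mpr hqr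
  refine ((((hasDerivAt_id x).sub_const r).mul_const (q - p)).div
    (((hasDerivAt_id x).sub_const p).mul_const (q - r)) (mul_ne_zero h1 h2)).congr_deriv ?_
  simp only [id]
  field_simp
  ring

/-- **Appendix A: hypergeometric solutions of KZ for `Hom(1, V*⊗V*⊗V⊗V)`.**
With `₂F₁` the Gauss hypergeometric series, `Δ = tℏ ∉ ℤ`,
`u = z₁₄ z₃₂ / (z₁₂ z₃₄)`,
`A = c₁ u^{1-Δ} ₂F₁(1-ℏ-Δ, 1+ℏ-Δ; 2-Δ; u) + c₂ ₂F₁(-ℏ, ℏ; Δ; u)`,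
`B = ℏ⁻¹ z₁₄^Δ z₂₃^{Δ-1} z₁₃^{1-Δ} z₂₄^{-Δ} z₁₂ ∂₁A`,
`f = A z₁₃^{-Δ} z₂₄^{-Δ}` and `g = B z₁₄^{-Δ} z₂₃^{-Δ}`, the functions `f, g`
satisfy on `D` the KZ equations
`ℏ⁻¹ ∂₁ f = g/z₁₂ - (t f + g)/z₁₃` and `ℏ⁻¹ ∂₁ g = f/z₁₂ - (f + t g)/z₁₄`. -/
theorem appendixA_hypergeometric_KZ
    (asc : ℂ → ℕ → ℂ)
    (hasc : ∀ a k, asc a k = ∏ i ∈ Finset.range k, (a + (i : ℂ)))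
    (F2 : ℂ → ℂ → ℂ → ℂ → ℂ)
    (hF2 : ∀ a b c w, F2 a b c w =
      ∑' k : ℕ, asc a k * asc b k / (asc c k * (Nat.factorial k : ℂ)) * w ^ k)
    (ℏ t : ℂ) (hℏ : ℏ ≠ 0) (Δ : ℂ) (hΔ : Δ = t * ℏ)
    (hΔint : ∀ m : ℤ, Δ ≠ (m : ℂ))
    (c₁ c₂ : ℂ)
    (D : Set (Fin 4 → ℝ))
    (hD : D = {z | (z 3 < z 2 ∧ z 2 < z 1 ∧ z 1 < z 0) ∧
      (z 0 - z 3) * (z 1 - z 2) < (z 0 - z 1) * (z 2 - z 3)})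
    (u : (Fin 4 → ℝ) → ℝ)
    (hu : ∀ z, u z = (z 0 - z 3) * (z 2 - z 1) / ((z 0 - z 1) * (z 2 - z 3)))
    (A : (Fin 4 → ℝ) → ℂ)
    (hA : ∀ z, A z =
      c₁ * ((u z : ℂ) ^ (1 - Δ)) * F2 (1 - ℏ - Δ) (1 + ℏ - Δ) (2 - Δ) (u z)
        + c₂ * F2 (-ℏ) ℏ Δ (u z))
    (B : (Fin 4 → ℝ) → ℂ)
    (hB : ∀ z, B z = ℏ⁻¹ * ((z 0 - z 3 : ℝ) : ℂ) ^ Δ * ((z 1 - z 2 : ℝ) : ℂ) ^ (Δ - 1)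
        * ((z 0 - z 2 : ℝ) : ℂ) ^ (1 - Δ) * ((z 1 - z 3 : ℝ) : ℂ) ^ (-Δ)
        * ((z 0 - z 1 : ℝ) : ℂ) * fderiv ℝ A z (Pi.single 0 1))
    (f : (Fin 4 → ℝ) → ℂ)
    (hf : ∀ z, f z = A z * ((z 0 - z 2 : ℝ) : ℂ) ^ (-Δ) * ((z 1 - z 3 : ℝ) : ℂ) ^ (-Δ))
    (g : (Fin 4 → ℝ) → ℂ)
    (hg : ∀ z, g z = B z * ((z 0 - z 3 : ℝ) : ℂ) ^ (-Δ) * ((z 1 - z 2 : ℝ) : ℂ) ^ (-Δ)) :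
    ∀ z ∈ D,
      ℏ⁻¹ * fderiv ℝ f z (Pi.single 0 1)
          = g z / ((z 0 - z 1 : ℝ) : ℂ) - (t * f z + g z) / ((z 0 - z 2 : ℝ) : ℂ)
      ∧ ℏ⁻¹ * fderiv ℝ g z (Pi.single 0 1)
          = f z / ((z 0 - z 1 : ℝ) : ℂ) - (f z + t * g z) / ((z 0 - z 3 : ℝ) : ℂ) := by
  have hΔ0 : Δ ≠ 0 := by simpa using hΔint 0
  have hΔ1 : Δ ≠ 1 := by simpa using hΔint 1
  obtain ⟨F', F'', hF⟩ := F2_ode asc hasc F2 hF2 (1 - ℏ - Δ) (1 + ℏ - Δ) (2 - Δ) (fun k h =>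
    hΔint (k + 2) (by push_cast; linear_combination -h))
  obtain ⟨G', G'', hG⟩ := F2_ode asc hasc F2 hF2 (-ℏ) ℏ Δ (fun k h =>
    hΔint (-k) (by push_cast; linear_combination h))
  obtain ⟨φ', φ'', hφ⟩ := solution_ode _ F' F'' _ G' G'' ℏ Δ c₁ c₂ hΔ0 hΔ1 hF hG
  set φ : ℝ → ℂ := fun y => c₁ * (y : ℂ) ^ (1 - Δ) * F2 (1 - ℏ - Δ) (1 + ℏ - Δ) (2 - Δ) y
    + c₂ * F2 (-ℏ) ℏ Δ y with hφdef
  have hAφ : A = fun z => φ (u z) := funext hA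
  have huD : ∀ z ∈ D, -1 < u z ∧ u z < 0 := by
    intro z hz
    rw [hD] at hz
    rw [hu]
    exact crossRatio_mem hz
  have hpos : ∀ z ∈ D, z 3 < z 2 ∧ z 2 < z 1 ∧ z 1 < z 0 := fun z hz => by
    rw [hD] at hz; exact hz.1
  have hDopen : IsOpen D := by
    rw [hD]
    refine (IsOpen.and (isOpen_lt (by fun_prop) (by fun_prop))
      (IsOpen.and (isOpen_lt (by fun_prop) (by fun_prop))
        (isOpen_lt (by fun_prop) (by fun_prop)))).and (isOpen_lt (by fun_prop) (by fun_prop))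
  have hud : ∀ z ∈ D, DifferentiableAt ℝ u z := by
    intro z hz
    obtain ⟨h1, h2, h3⟩ := hpos z hz
    rw [show u = _ from funext hu]
    have : (z 0 - z 1) * (z 2 - z 3) ≠ 0 := mul_ne_zero (by linarith) (by linarith)
    fun_prop (disch := assumption)
  -- the derivative of `u` in the first variable
  have hu1 : ∀ z ∈ D, HasDerivAt (fun s : ℝ => u (Function.update z 0 s))
      ((z 1 - z 2) * (z 1 - z 3) / ((z 2 - z 3) * (z 0 - z 1) ^ 2)) (z 0) := by
    intro z hz
    have := hasDerivAt_crossRatio (q := z 2) (r := z 3) (hpos z hz).2.2.ne'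
    simpa [hu] using this
  -- the chain rule for `ψ ∘ u` in the first variable
  have hφA : ∀ z ∈ D, ∀ {ψ : ℝ → ℂ} {d : ℂ}, HasDerivAt ψ d (u z) →
      HasDerivAt (fun s : ℝ => ψ (u (Function.update z 0 s)))
        ((((z 1 - z 2) * (z 1 - z 3) / ((z 2 - z 3) * (z 0 - z 1) ^ 2) : ℝ) : ℂ) * d) (z 0) := by
    intro z hz ψ d hd
    rw [← Function.update_eq_self 0 z] at hd
    have := HasDerivAt.scomp (z 0) hd (hu1 z hz)
    rw [Complex.real_smul] at this
    exact this
  have hA1 : ∀ z ∈ D, fderiv ℝ A z (Pi.single 0 1) =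
      (((z 1 - z 2) * (z 1 - z 3) / ((z 2 - z 3) * (z 0 - z 1) ^ 2) : ℝ) : ℂ) * φ' (u z) := by
    intro z hz
    obtain ⟨hl, hr⟩ := huD z hz
    have hd := (hφ (u z) hl hr).1
    rw [hAφ]
    refine fderiv_single_of_update (hd.differentiableAt.comp z (hud z hz)) ?_
    exact hφA z hz hd
  -- the powers of `z₁₄` cancel in `g`, those of `z₂₃` leave `z₂₃⁻¹`, and `z₂₃⁻¹ z₁₃ z₁₂ ∂₁u = 1 - u`
  have hgD : ∀ z ∈ D, g z = ℏ⁻¹ * (1 - (u z : ℂ)) * φ' (u z)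
      * ((z 0 - z 2 : ℝ) : ℂ) ^ (-Δ) * ((z 1 - z 3 : ℝ) : ℂ) ^ (-Δ) := by
    intro z hz
    obtain ⟨h1, h2, h3⟩ := hpos z hz
    have n01 : ((z 0 - z 1 : ℝ) : ℂ) ≠ 0 := by exact_mod_cast (by linarith : z 0 - z 1 ≠ 0)
    have n02 : ((z 0 - z 2 : ℝ) : ℂ) ≠ 0 := by exact_mod_cast (by linarith : z 0 - z 2 ≠ 0)
    have n03 : ((z 0 - z 3 : ℝ) : ℂ) ≠ 0 := by exact_mod_cast (by linarith : z 0 - z 3 ≠ 0)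
    have n12 : ((z 1 - z 2 : ℝ) : ℂ) ≠ 0 := by exact_mod_cast (by linarith : z 1 - z 2 ≠ 0)
    have n23 : ((z 2 - z 3 : ℝ) : ℂ) ≠ 0 := by exact_mod_cast (by linarith : z 2 - z 3 ≠ 0)
    have p03 : ((z 0 - z 3 : ℝ) : ℂ) ^ Δ ≠ 0 := fun h => n03 ((Complex.cpow_eq_zero_iff _ _).mp h).1
    have p12 : ((z 1 - z 2 : ℝ) : ℂ) ^ Δ ≠ 0 := fun h => n12 ((Complex.cpow_eq_zero_iff _ _).mp h).1
    rw [hg, hB, hA1 z hz, Complex.cpow_sub _ _ n12, Complex.cpow_one,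
      Complex.cpow_neg ((z 0 - z 3 : ℝ) : ℂ), Complex.cpow_neg ((z 1 - z 2 : ℝ) : ℂ),
      show (1 - Δ) = -Δ + 1 by ring, Complex.cpow_add _ _ n02, Complex.cpow_one]
    generalize φ' _ = Y
    rw [hu]
    generalize ((z 0 - z 3 : ℝ) : ℂ) ^ Δ = P at p03 ⊢
    generalize ((z 1 - z 2 : ℝ) : ℂ) ^ Δ = Q at p12 ⊢
    generalize ((z 0 - z 2 : ℝ) : ℂ) ^ (-Δ) = E
    generalize ((z 1 - z 3 : ℝ) : ℂ) ^ (-Δ) = W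
    push_cast at n01 n02 n03 n12 n23 ⊢
    field_simp
    ring
  intro z hz
  obtain ⟨h1, h2, h3⟩ := hpos z hz
  obtain ⟨hl, hr⟩ := huD z hz
  obtain ⟨hd1, hd2, ode⟩ := hφ (u z) hl hr
  have n01 : ((z 0 - z 1 : ℝ) : ℂ) ≠ 0 := by exact_mod_cast (by linarith : z 0 - z 1 ≠ 0)
  have n02 : ((z 0 - z 2 : ℝ) : ℂ) ≠ 0 := by exact_mod_cast (by linarith : z 0 - z 2 ≠ 0)
  have n03 : ((z 0 - z 3 : ℝ) : ℂ) ≠ 0 := by exact_mod_cast (by linarith : z 0 - z 3 ≠ 0)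
  have n12 : ((z 1 - z 2 : ℝ) : ℂ) ≠ 0 := by exact_mod_cast (by linarith : z 1 - z 2 ≠ 0)
  have n13 : ((z 1 - z 3 : ℝ) : ℂ) ≠ 0 := by exact_mod_cast (by linarith : z 1 - z 3 ≠ 0)
  have n23 : ((z 2 - z 3 : ℝ) : ℂ) ≠ 0 := by exact_mod_cast (by linarith : z 2 - z 3 ≠ 0)
  have dE := differentiableAt_sub_cpow (z := z) (i := 0) (j := 2) (by linarith) (-Δ)
  have dW := differentiableAt_sub_cpow (z := z) (i := 1) (j := 3) (by linarith) (-Δ)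
  have hE : HasDerivAt (fun s : ℝ => ((s - z 2 : ℝ) : ℂ) ^ (-Δ))
      (-Δ * ((z 0 - z 2 : ℝ) : ℂ) ^ (-Δ) / ((z 0 - z 2 : ℝ) : ℂ)) (z 0) := by
    have h := HasDerivAt.comp_sub_const (z 0) (z 2)
      (hasDerivAt_ofReal_cpow_const (by linarith : z 0 - z 2 ≠ 0) (neg_ne_zero.mpr hΔ0))
    rwa [Complex.cpow_sub _ _ n02, Complex.cpow_one, ← mul_div_assoc] at h
  have hf1 : fderiv ℝ f z (Pi.single 0 1) =
      ((((z 1 - z 2) * (z 1 - z 3) / ((z 2 - z 3) * (z 0 - z 1) ^ 2) : ℝ) : ℂ) * φ' (u z)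
        * ((z 0 - z 2 : ℝ) : ℂ) ^ (-Δ)
        + φ (u z) * (-Δ * ((z 0 - z 2 : ℝ) : ℂ) ^ (-Δ) / ((z 0 - z 2 : ℝ) : ℂ)))
        * ((z 1 - z 3 : ℝ) : ℂ) ^ (-Δ) := by
    rw [show f = fun w => φ (u w) * ((w 0 - w 2 : ℝ) : ℂ) ^ (-Δ) * ((w 1 - w 3 : ℝ) : ℂ) ^ (-Δ)
      from funext fun w => by rw [hf, hAφ]]
    refine fderiv_single_of_update
      (((hd1.differentiableAt.comp z (hud z hz)).mul dE).mul dW) ?_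
    have := ((hφA z hz hd1).mul hE).mul_const (((z 1 - z 3 : ℝ) : ℂ) ^ (-Δ))
    rw [Function.update_eq_self] at this
    exact this
  have hg1 : fderiv ℝ g z (Pi.single 0 1) =
      ((((z 1 - z 2) * (z 1 - z 3) / ((z 2 - z 3) * (z 0 - z 1) ^ 2) : ℝ) : ℂ)
          * (ℏ⁻¹ * (-1) * φ' (u z) + ℏ⁻¹ * (1 - (u z : ℂ)) * φ'' (u z))
          * ((z 0 - z 2 : ℝ) : ℂ) ^ (-Δ)
        + ℏ⁻¹ * (1 - (u z : ℂ)) * φ' (u z)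
          * (-Δ * ((z 0 - z 2 : ℝ) : ℂ) ^ (-Δ) / ((z 0 - z 2 : ℝ) : ℂ)))
        * ((z 1 - z 3 : ℝ) : ℂ) ^ (-Δ) := by
    -- the formula `hgD` holds on a neighbourhood of `z`, as `D` is open
    rw [Filter.EventuallyEq.fderiv_eq (Filter.eventuallyEq_of_mem (hDopen.mem_nhds hz) hgD)]
    have hψ : HasDerivAt (fun y : ℝ => ℏ⁻¹ * (1 - (y : ℂ)) * φ' y)
        (ℏ⁻¹ * (-1) * φ' (u z) + ℏ⁻¹ * (1 - (u z : ℂ)) * φ'' (u z)) (u z) := by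
      have := (hasDerivAt_id (u z)).ofReal_comp
      exact ((by simpa using this.const_sub 1 :
        HasDerivAt (fun y : ℝ => 1 - (y : ℂ)) (-1) (u z)).const_mul ℏ⁻¹).mul hd2
    refine fderiv_single_of_update
      (((hψ.differentiableAt.comp z (hud z hz)).mul dE).mul dW) ?_
    have := ((hφA z hz hψ).mul hE).mul_const (((z 1 - z 3 : ℝ) : ℂ) ^ (-Δ))
    rw [Function.update_eq_self] at this
    exact this
  change _ + ℏ ^ 2 * φ (u z) = 0 at ode
  rw [hf1, hg1, hgD z hz, hf, hAφ]
  beta_reduce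
  generalize φ (u z) = Y₀ at ode ⊢
  generalize φ' (u z) = Y₁ at ode ⊢
  generalize φ'' (u z) = Y₂ at ode ⊢
  rw [hu] at ode ⊢
  generalize ((z 0 - z 2 : ℝ) : ℂ) ^ (-Δ) = E
  generalize ((z 1 - z 3 : ℝ) : ℂ) ^ (-Δ) = W
  subst hΔ
  push_cast at n01 n02 n03 n12 n13 n23 ode ⊢
  constructor
  · field_simp
    ring
  -- the factor is `ℏ⁻² E W u⁻¹ ∂₁u`, since `∂₁u / u = -z₂₄ / (z₁₂ z₁₄)`
  · linear_combination (norm := skip) (-(ℏ⁻¹ ^ 2 * E * W * (z 1 - z 3) / ((z 0 - z 1) * (z 0 - z 3)))) * ode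
    field_simp
    ring
end
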